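/- arXiv:2510.21334 — 2 statements merged into one kernel-verified Lean document; each statement's English description precedes it below -/
import Mathlib

section
/- There exists an injective homomorphism ρ from the free group F₂ on two generators into the affine group Aff(ℝ³) such that the resulting action of F₂ on ℝ³ is free and properly discontinuous. (Margulis: non-abelian free groups admit proper affine actions on ℝ³.) -/
/-!
`SL(2, ℝ)` acts on binary quadratic forms, a copy of `ℝ³`. For a form `x` and vectors `P`, `Q` of
the plane consider the ratio `x(P, Q) / area(P, Q)` of the polar form of `x` to the area form. It is
additive in `x` and invariant under `SL(2, ℝ)`; if `P` and `Q` span the eigenlines of the linear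
part of an affine map and `x` is its translation part, it is Margulis' invariant of that map.

Take two hyperbolic elements of `SL(2, ℝ)` playing ping-pong on cones of the plane, and translate
each along a form that it fixes. Choose a base vector outside all attracting cones. Along a reduced
word `γ` of length `n` the ratio gains a definite amount per letter, because at each letter `P` lies
near the attracting line and `Q` away from it; so the ratio of `γ x` at suitable vectors exceeds
that of `x` by at least `n / 4`. Since these vectors are transverse, both ratios are controlled by
the norms of `x` and `γ x`. Hence only finitely many `γ` can return a bounded set to itself.
-/

open Matrix Matrix.SpecialLinearGroup
open scoped MatrixGroups

namespace Margulis

section FreeGroup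

variable {α : Type*}

theorem finite_of_norm_le [Finite α] [DecidableEq α] {S : Set (FreeGroup α)} {N : ℕ}
    (hS : ∀ γ ∈ S, γ.norm ≤ N) : S.Finite :=
  ((List.finite_length_le (α × Bool) N).preimage FreeGroup.toWord_injective.injOn).subset hS

/-- The letter `s⁻¹` of a word in a free group, where `(i, true)` is the generator `i` and
`(i, false)` its inverse. -/
def invLetter (s : α × Bool) : α × Bool := (s.1, !s.2)

@[simp]
theorem invLetter_invLetter (s : α × Bool) : invLetter (invLetter s) = s := by
  simp [invLetter]

theorem mk_invLetter (s : α × Bool) :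
    FreeGroup.mk [invLetter s] = (FreeGroup.mk [s])⁻¹ := by
  simp [invLetter, FreeGroup.invRev]

theorem mk_cons (s : α × Bool) (L : List (α × Bool)) :
    FreeGroup.mk (s :: L) = FreeGroup.mk [s] * FreeGroup.mk L := by
  simp

theorem invLetter_ne_of_isReduced {s t : α × Bool} {L : List (α × Bool)}
    (h : FreeGroup.IsReduced (s :: t :: L)) : invLetter s ≠ t := by
  rintro rfl
  simp [invLetter] at h

end FreeGroup

section PingPong

variable {α G V : Type*} [Group G] [MulAction G V]

/-- A ping-pong configuration for a free group acting on `V` through `σ`: `C s` is the attracting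
set of the letter `s`, and `E s` plays the part of a complement of `C s`. It need not be one: a
larger gap between the two gives more room for estimates. -/
structure IsPingPong (σ : FreeGroup α →* G) (C E : α × Bool → Set V) : Prop where
  subset_of_ne : ∀ {s t}, s ≠ t → C t ⊆ E s
  smul_mem : ∀ s, ∀ v ∈ E (invLetter s), σ (FreeGroup.mk [s]) • v ∈ C s

/-- Each letter `s` increases `f` by at least `ε`, as long as the first vector ends up in `C s` and
the second one in `E s`. The intended `f` is `f γ v w = φ (γ • x) v w`, for a point `x` of a space
on which the free group acts. -/
def GainsPerLetter (σ : FreeGroup α →* G) (C E : α × Bool → Set V)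
    (f : FreeGroup α → V → V → ℝ) (ε : ℝ) : Prop :=
  ∀ γ s v w, σ (FreeGroup.mk [s]) • v ∈ C s → w ∈ E s →
    f γ v ((σ (FreeGroup.mk [s]))⁻¹ • w) + ε ≤
      f (FreeGroup.mk [s] * γ) (σ (FreeGroup.mk [s]) • v) w

namespace IsPingPong

variable {σ : FreeGroup α →* G} {C E : α × Bool → Set V}

theorem inv_smul_mem (h : IsPingPong σ C E) {s : α × Bool} {v : V} (hv : v ∈ E s) :
    (σ (FreeGroup.mk [s]))⁻¹ • v ∈ C (invLetter s) := by
  rw [← map_inv, ← mk_invLetter]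
  exact h.smul_mem _ v (by rwa [invLetter_invLetter])

theorem mk_cons_smul_mem (h : IsPingPong σ C E) {p : V} (hp : ∀ s, p ∈ E s) :
    ∀ {s : α × Bool} {L : List (α × Bool)}, FreeGroup.IsReduced (s :: L) →
      σ (FreeGroup.mk (s :: L)) • p ∈ C s
  | s, [], _ => h.smul_mem s p (hp _)
  | s, t :: L, hred => by
    rw [mk_cons, map_mul, mul_smul]
    have hne : invLetter s ≠ t := invLetter_ne_of_isReduced hred
    exact h.smul_mem s _ (h.subset_of_ne hne
      (h.mk_cons_smul_mem hp (FreeGroup.isReduced_cons_cons.1 hred).2))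

theorem length_mul_sub_le (h : IsPingPong σ C E) {f : FreeGroup α → V → V → ℝ} {ε M : ℝ} {p : V}
    (hp : ∀ s, p ∈ E s)
    (hstep : GainsPerLetter σ C E f ε) (hbase : ∀ s, ∀ w ∈ C s, -M ≤ f 1 p w) :
    ∀ {s : α × Bool} {L : List (α × Bool)} {w : V}, FreeGroup.IsReduced (s :: L) → w ∈ E s →
      (s :: L).length * ε - M ≤
        f (FreeGroup.mk (s :: L)) (σ (FreeGroup.mk (s :: L)) • p) w
  | s, [], w, _, hw => by
    have hgain := hstep 1 s p w (h.smul_mem s p (hp _)) hw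
    have hinit := hbase _ _ (h.inv_smul_mem hw)
    rw [mul_one] at hgain
    rw [List.length_singleton, Nat.cast_one]
    linarith
  | s, t :: L, w, hred, hw => by
    have hmem := h.mk_cons_smul_mem hp hred
    have hne : invLetter s ≠ t := invLetter_ne_of_isReduced hred
    have hw' : (σ (FreeGroup.mk [s]))⁻¹ • w ∈ E t :=
      h.subset_of_ne hne.symm (h.inv_smul_mem hw)
    have ih := h.length_mul_sub_le hp hstep hbase (FreeGroup.isReduced_cons_cons.1 hred).2 hw'
    rw [mk_cons, map_mul, mul_smul] at hmem ⊢
    have hgain := hstep (FreeGroup.mk (t :: L)) s _ w hmem hw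
    rw [List.length_cons, Nat.cast_succ]
    linarith

theorem norm_mul_le [DecidableEq α] (h : IsPingPong σ C E) {f : FreeGroup α → V → V → ℝ}
    {ε M : ℝ} {p : V} (hM : 0 ≤ M) (hp : ∀ s, p ∈ E s)
    (hstep : GainsPerLetter σ C E f ε) (hbase : ∀ s, ∀ w ∈ C s, -M ≤ f 1 p w) (γ : FreeGroup α)
    (hend : ∀ s, ∀ v ∈ C s, f γ v p ≤ M) : γ.norm * ε ≤ 2 * M := by
  rw [FreeGroup.norm]
  rcases hγ : γ.toWord with _ | ⟨s, L⟩
  · simpa using hM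
  · have hred : FreeGroup.IsReduced (s :: L) := hγ ▸ FreeGroup.isReduced_toWord
    have hmk : FreeGroup.mk (s :: L) = γ := by rw [← hγ, FreeGroup.mk_toWord]
    have hlower := h.length_mul_sub_le hp hstep hbase hred (hp s)
    have hupper := hend s _ (h.mk_cons_smul_mem hp hred)
    rw [hmk] at hlower hupper
    linarith

end IsPingPong

end PingPong

section Affine

variable {α k V : Type*} [Ring k] [AddCommGroup V] [Module k V]

/-- The affine action of a free group whose generator `i` acts by `x ↦ A i x + u i`. -/
def affineLift (A : α → V ≃ₗ[k] V) (u : α → V) : FreeGroup α →* (V ≃ᵃ[k] V) :=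
  FreeGroup.lift fun i ↦ (A i).toAffineEquiv.trans (AffineEquiv.constVAdd k V (u i))

/-- The translation part of the letter `s` in `affineLift A u` when each `A i` fixes `u i`. -/
def letterTranslation (u : α → V) (s : α × Bool) : V := cond s.2 (u s.1) (-u s.1)

theorem affineLift_mk_singleton {A : α → V ≃ₗ[k] V} {u : α → V} (hu : ∀ i, A i (u i) = u i)
    (s : α × Bool) (x : V) :
    affineLift A u (FreeGroup.mk [s]) x =
      FreeGroup.lift A (FreeGroup.mk [s]) x + letterTranslation u s := by
  obtain ⟨i, _ | _⟩ := s
  · have hsymm : (A i).symm (u i) = u i := by rw [LinearEquiv.symm_apply_eq, hu]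
    have hinv : affineLift A u (FreeGroup.mk [(i, false)]) x = (A i).symm (-u i + x) := by
      simp only [affineLift, FreeGroup.lift_mk]
      rfl
    rw [hinv, map_add, map_neg, hsymm, add_comm]
    simp [letterTranslation]
  · simp [affineLift, letterTranslation, add_comm]

variable {Γ P : Type*} [Group Γ] [AddTorsor V P]

theorem apply_ne_self_of_finite [IsMulTorsionFree Γ] (ρ : Γ →* (P ≃ᵃ[k] P)) {x : P}
    (hfin : {γ | ρ γ x = x}.Finite) {γ : Γ} (hγ : γ ≠ 1) :
    ρ γ x ≠ x := by
  intro hfix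
  refine hγ (IsOfFinOrder.eq_one' (finite_powers.1 (hfin.subset ?_)))
  rintro _ ⟨n, rfl⟩
  induction n with
  | zero => simp
  | succ n ih => simpa [pow_succ, AffineEquiv.coe_mul, hfix] using ih

theorem injective_of_apply_ne_self (ρ : Γ →* (P ≃ᵃ[k] P)) (x : P)
    (hfree : ∀ γ, γ ≠ 1 → ρ γ x ≠ x) : Function.Injective ρ := by
  refine (injective_iff_map_eq_one ρ).2 fun γ hγ ↦ by_contra fun hne ↦ hfree γ hne ?_
  rw [hγ, AffineEquiv.coe_one, id]

end Affine

section Forms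

variable {R : Type*} [CommRing R]

/-- The polar form of the binary quadratic form `x 0 * X ^ 2 + 2 * x 1 * X * Y + x 2 * Y ^ 2`. -/
def polar (x : Fin 3 → R) (P Q : Fin 2 → R) : R :=
  x 0 * P 0 * Q 0 + x 1 * (P 0 * Q 1 + P 1 * Q 0) + x 2 * P 1 * Q 1

/-- The standard area form of the plane. -/
def area (P Q : Fin 2 → R) : R := P 0 * Q 1 - P 1 * Q 0

theorem polar_add (x y : Fin 3 → R) (P Q : Fin 2 → R) :
    polar (x + y) P Q = polar x P Q + polar y P Q := by
  simp only [polar, Pi.add_apply]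
  ring

theorem polar_smul (c : R) (x : Fin 3 → R) (P Q : Fin 2 → R) :
    polar (c • x) P Q = c * polar x P Q := by
  simp only [polar, Pi.smul_apply, smul_eq_mul]
  ring

theorem polar_comm (x : Fin 3 → R) (P Q : Fin 2 → R) : polar x P Q = polar x Q P := by
  simp only [polar]
  ring

theorem area_swap (P Q : Fin 2 → R) : area P Q = -area Q P := by
  simp only [area]
  ring

theorem polar_ext {x y : Fin 3 → R} (h : ∀ P Q, polar x P Q = polar y P Q) : x = y := by
  ext i
  fin_cases i
  · simpa [polar] using h ![1, 0] ![1, 0]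
  · simpa [polar] using h ![1, 0] ![0, 1]
  · simpa [polar] using h ![0, 1] ![0, 1]

theorem smul_eq (g : SL(2, R)) (P : Fin 2 → R) :
    g • P = ![g 0 0 * P 0 + g 0 1 * P 1, g 1 0 * P 0 + g 1 1 * P 1] := by
  ext i
  fin_cases i <;> simp [Matrix.SpecialLinearGroup.smul_def, mulVec, dotProduct, Fin.sum_univ_two]

theorem area_smul (g : SL(2, R)) (P Q : Fin 2 → R) : area (g • P) (g • Q) = area P Q := by
  have hdet : g 0 0 * g 1 1 - g 0 1 * g 1 0 = 1 := by rw [← det_fin_two, g.det_coe]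
  simp only [area, smul_eq, cons_val_zero, cons_val_one]
  linear_combination (P 0 * Q 1 - P 1 * Q 0) * hdet

/-- The form with polar form `(P, Q) ↦ polar x (g⁻¹ • P) (g⁻¹ • Q)`. -/
def transport (g : SL(2, R)) (x : Fin 3 → R) : Fin 3 → R :=
  ![polar x (g⁻¹ • ![1, 0]) (g⁻¹ • ![1, 0]), polar x (g⁻¹ • ![1, 0]) (g⁻¹ • ![0, 1]),
    polar x (g⁻¹ • ![0, 1]) (g⁻¹ • ![0, 1])]

theorem polar_transport (g : SL(2, R)) (x : Fin 3 → R) (P Q : Fin 2 → R) :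
    polar (transport g x) P Q = polar x (g⁻¹ • P) (g⁻¹ • Q) := by
  simp only [polar, transport, smul_eq, cons_val]
  ring

/-- The representation of `SL(2, R)` on binary quadratic forms. -/
def formRep : Representation R SL(2, R) (Fin 3 → R) where
  toFun g :=
    { toFun := transport g
      map_add' := fun x y ↦ polar_ext fun P Q ↦ by simp only [polar_transport, polar_add]
      map_smul' := fun c x ↦ polar_ext fun P Q ↦ by
        simp only [polar_transport, polar_smul, RingHom.id_apply] }
  map_one' := LinearMap.ext fun x ↦ polar_ext fun P Q ↦ by
    simp [polar_transport]
  map_mul' g h := LinearMap.ext fun x ↦ polar_ext fun P Q ↦ by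
    simp [polar_transport, mul_smul]

/-- `formRep` with values in linear automorphisms. -/
def formAut : SL(2, R) →* ((Fin 3 → R) ≃ₗ[R] (Fin 3 → R)) :=
  (LinearMap.GeneralLinearGroup.generalLinearEquiv R _).toMonoidHom.comp formRep.toHomUnits

theorem formAut_apply (g : SL(2, R)) (x : Fin 3 → R) : formAut g x = transport g x := rfl

end Forms

section Ratio

variable {K : Type*} [Field K]

/-- The value of the form `x` on `P`, `Q` relative to their area, a quantity depending only on the
lines spanned by `P` and `Q`. -/
def margulisRatio (x : Fin 3 → K) (P Q : Fin 2 → K) : K := polar x P Q / area P Q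

theorem margulisRatio_add (x y : Fin 3 → K) (P Q : Fin 2 → K) :
    margulisRatio (x + y) P Q = margulisRatio x P Q + margulisRatio y P Q := by
  rw [margulisRatio, polar_add, add_div, margulisRatio, margulisRatio]

theorem margulisRatio_swap (x : Fin 3 → K) (P Q : Fin 2 → K) :
    margulisRatio x P Q = -margulisRatio x Q P := by
  rw [margulisRatio, polar_comm, area_swap, div_neg, margulisRatio]

theorem margulisRatio_formAut (g : SL(2, K)) (x : Fin 3 → K) (P Q : Fin 2 → K) :
    margulisRatio (formAut g x) (g • P) Q = margulisRatio x P (g⁻¹ • Q) := by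
  have harea : area (g • P) Q = area P (g⁻¹ • Q) := by
    rw [← area_smul g P, smul_inv_smul]
  rw [margulisRatio, formAut_apply, polar_transport, inv_smul_smul, harea, margulisRatio]

theorem margulisRatio_affineLift {α : Type*} {g : α → SL(2, K)} {u : α → Fin 3 → K}
    (hu : ∀ i, formAut (g i) (u i) = u i) (γ : FreeGroup α) (s : α × Bool) (x : Fin 3 → K)
    (P Q : Fin 2 → K) :
    margulisRatio (affineLift (fun i ↦ formAut (g i)) u (FreeGroup.mk [s] * γ) x)
        (FreeGroup.lift g (FreeGroup.mk [s]) • P) Q =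
      margulisRatio (affineLift (fun i ↦ formAut (g i)) u γ x) P
          ((FreeGroup.lift g (FreeGroup.mk [s]))⁻¹ • Q) +
        margulisRatio (letterTranslation u s) (FreeGroup.lift g (FreeGroup.mk [s]) • P) Q := by
  have hlin : FreeGroup.lift (fun i ↦ formAut (g i)) = formAut.comp (FreeGroup.lift g) := by
    ext1 i
    simp
  rw [map_mul, AffineEquiv.coe_mul, Function.comp_apply,
    affineLift_mk_singleton hu, margulisRatio_add, hlin, MonoidHom.comp_apply,
    margulisRatio_formAut]

end Ratio

theorem abs_polar_le (x : Fin 3 → ℝ) (P Q : Fin 2 → ℝ) :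
    |polar x P Q| ≤ 4 * ‖x‖ * (‖P‖ * ‖Q‖) := by
  have hterm (i : Fin 3) (j k : Fin 2) : |x i * (P j * Q k)| ≤ ‖x‖ * (‖P‖ * ‖Q‖) := by
    rw [abs_mul, abs_mul]
    gcongr
    exacts [norm_le_pi_norm x i, norm_le_pi_norm P j, norm_le_pi_norm Q k]
  calc |polar x P Q|
      = |x 0 * (P 0 * Q 0) + x 1 * (P 0 * Q 1) + x 1 * (P 1 * Q 0) + x 2 * (P 1 * Q 1)| := by
        rw [polar]
        ring_nf
    _ ≤ |x 0 * (P 0 * Q 0)| + |x 1 * (P 0 * Q 1)| + |x 1 * (P 1 * Q 0)|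
          + |x 2 * (P 1 * Q 1)| := by
        exact (abs_add_le _ _).trans (add_le_add_left (abs_add_three _ _ _) _)
    _ ≤ 4 * ‖x‖ * (‖P‖ * ‖Q‖) := by
        linarith [hterm 0 0 0, hterm 1 0 1, hterm 1 1 0, hterm 2 1 1]

section Generators

/-- Two hyperbolic elements with eigenvalues `4` and `1 / 4`: the first has the coordinate axes as
eigenlines, the second the two diagonals. -/
noncomputable def generator : Fin 2 → SL(2, ℝ) :=
  ![⟨!![4, 0; 0, 1 / 4], by norm_num [det_fin_two]⟩,
    ⟨!![17 / 8, 15 / 8; 15 / 8, 17 / 8], by norm_num [det_fin_two]⟩]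

theorem generator_zero_smul (P : Fin 2 → ℝ) : generator 0 • P = ![4 * P 0, P 1 / 4] := by
  rw [smul_eq]
  simp only [generator, coe_mk, of_apply, cons_val]
  ring_nf

theorem generator_one_smul (P : Fin 2 → ℝ) :
    generator 1 • P = ![(17 * P 0 + 15 * P 1) / 8, (15 * P 0 + 17 * P 1) / 8] := by
  rw [smul_eq]
  simp only [generator, coe_mk, of_apply, cons_val]
  ring_nf

theorem inv_generator_zero_smul (P : Fin 2 → ℝ) :
    (generator 0)⁻¹ • P = ![P 0 / 4, 4 * P 1] := by
  rw [inv_smul_eq_iff, generator_zero_smul]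
  ext j
  fin_cases j <;> simp only [cons_val, Fin.mk_one, Fin.zero_eta] <;> ring

theorem inv_generator_one_smul (P : Fin 2 → ℝ) :
    (generator 1)⁻¹ • P = ![(17 * P 0 - 15 * P 1) / 8, (17 * P 1 - 15 * P 0) / 8] := by
  rw [inv_smul_eq_iff, generator_one_smul]
  ext j
  fin_cases j <;> simp only [cons_val, Fin.mk_one, Fin.zero_eta] <;> ring

/-- The forms `2XY` and `Y² - X²`, fixed by the respective generators. -/
def neutralForm : Fin 2 → Fin 3 → ℝ := ![![0, 1, 0], ![-1, 0, 1]]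

theorem formAut_neutralForm (i : Fin 2) :
    formAut (generator i) (neutralForm i) = neutralForm i := by
  refine polar_ext fun P Q ↦ ?_
  rw [formAut_apply, polar_transport]
  match i with
  | 0 | 1 =>
    simp only [polar, neutralForm, inv_generator_zero_smul, inv_generator_one_smul, cons_val]
    ring

/-- The linear coordinate of the plane multiplied by `4` under the letter `s`; it is divided by `4`
under the inverse letter, so `(dominantCoord s, dominantCoord (invLetter s))` are eigencoordinates
of `s`. -/
def dominantCoord : Fin 2 × Bool → (Fin 2 → ℝ) → ℝ
  | (0, true), P => P 0
  | (0, false), P => P 1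
  | (1, true), P => P 0 + P 1
  | (1, false), P => P 0 - P 1

/-- The determinant of the eigencoordinates `(dominantCoord s, dominantCoord (invLetter s))`. -/
def frameDet : Fin 2 × Bool → ℝ
  | (0, true) => 1
  | (0, false) => -1
  | (1, true) => -2
  | (1, false) => 2

/-- A neighbourhood of the attracting eigenline of the letter `s`. -/
def attractingCone (s : Fin 2 × Bool) : Set (Fin 2 → ℝ) :=
  {P | 5 * |dominantCoord (invLetter s) P| < |dominantCoord s P|}

/-- The complement of a larger neighbourhood of the attracting eigenline of the letter `s`. -/
def transverseCone (s : Fin 2 × Bool) : Set (Fin 2 → ℝ) :=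
  {P | |dominantCoord s P| < 3 * |dominantCoord (invLetter s) P|}

theorem frameDet_ne_zero (s : Fin 2 × Bool) : frameDet s ≠ 0 := by
  match s with
  | (0, true) | (0, false) | (1, true) | (1, false) => norm_num [frameDet]

theorem abs_frameDet_le (s : Fin 2 × Bool) : |frameDet s| ≤ 2 := by
  match s with
  | (0, true) | (0, false) | (1, true) | (1, false) => norm_num [frameDet]

theorem frameDet_mul_area (s : Fin 2 × Bool) (P Q : Fin 2 → ℝ) :
    frameDet s * area P Q =
      dominantCoord s P * dominantCoord (invLetter s) Q
        - dominantCoord (invLetter s) P * dominantCoord s Q := by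
  match s with
  | (0, true) | (0, false) | (1, true) | (1, false) =>
    simp only [frameDet, area, dominantCoord, invLetter, Bool.not_true, Bool.not_false]
    ring

theorem frameDet_mul_polar (s : Fin 2 × Bool) (P Q : Fin 2 → ℝ) :
    frameDet s * polar (letterTranslation neutralForm s) P Q =
      dominantCoord s P * dominantCoord (invLetter s) Q
        + dominantCoord (invLetter s) P * dominantCoord s Q := by
  match s with
  | (0, true) | (0, false) | (1, true) | (1, false) =>
    simp only [frameDet, polar, letterTranslation, neutralForm, dominantCoord, invLetter,
      Bool.not_true, Bool.not_false, cond_true, cond_false, Pi.neg_apply, cons_val]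
    ring

theorem dominantCoord_letter_smul (s : Fin 2 × Bool) (P : Fin 2 → ℝ) :
    dominantCoord s (FreeGroup.lift generator (FreeGroup.mk [s]) • P) = 4 * dominantCoord s P := by
  match s with
  | (0, true) | (0, false) | (1, true) | (1, false) =>
    simp only [FreeGroup.lift_mk, List.map, cond_true, cond_false, List.prod_singleton,
      dominantCoord, generator_zero_smul, generator_one_smul, inv_generator_zero_smul,
      inv_generator_one_smul, cons_val] <;> ring

theorem dominantCoord_invLetter_letter_smul (s : Fin 2 × Bool) (P : Fin 2 → ℝ) :
    dominantCoord (invLetter s) (FreeGroup.lift generator (FreeGroup.mk [s]) • P) =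
      dominantCoord (invLetter s) P / 4 := by
  have h := dominantCoord_letter_smul (invLetter s)
    (FreeGroup.lift generator (FreeGroup.mk [s]) • P)
  rw [mk_invLetter, map_inv, inv_smul_smul] at h
  linarith

theorem norm_le_max_dominantCoord (s : Fin 2 × Bool) (P : Fin 2 → ℝ) :
    ‖P‖ ≤ max |dominantCoord s P| |dominantCoord (invLetter s) P| := by
  rw [pi_norm_le_iff_of_nonneg (by positivity)]
  intro j
  obtain ⟨i, b⟩ := s
  fin_cases i <;> fin_cases j <;> cases b <;> grind [dominantCoord, invLetter, Real.norm_eq_abs]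

theorem attractingCone_subset_transverseCone {s t : Fin 2 × Bool} (hst : s ≠ t) :
    attractingCone t ⊆ transverseCone s := by
  intro P hP
  simp only [attractingCone, transverseCone, Set.mem_ofPred_eq] at hP ⊢
  obtain ⟨i, b⟩ := s
  obtain ⟨j, c⟩ := t
  fin_cases i <;> fin_cases j <;> cases b <;> cases c <;>
    grind [dominantCoord, invLetter]

theorem isPingPong_generator :
    IsPingPong (FreeGroup.lift generator) attractingCone transverseCone where
  subset_of_ne := attractingCone_subset_transverseCone
  smul_mem s P hP := by
    rw [transverseCone, Set.mem_ofPred_eq, invLetter_invLetter] at hP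
    rw [attractingCone, Set.mem_ofPred_eq, dominantCoord_letter_smul,
      dominantCoord_invLetter_letter_smul, abs_mul, abs_div, abs_of_pos (by norm_num : (0 : ℝ) < 4)]
    linarith [abs_nonneg (dominantCoord s P)]

/-- A vector outside all attracting directions of `generator`. -/
def basePoint : Fin 2 → ℝ := ![5, 2]

theorem basePoint_mem_transverseCone (s : Fin 2 × Bool) : basePoint ∈ transverseCone s := by
  match s with
  | (0, true) | (0, false) | (1, true) | (1, false) =>
    norm_num [transverseCone, dominantCoord, invLetter, basePoint, abs_of_pos]

theorem norm_le_of_mem_attractingCone {s : Fin 2 × Bool} {P : Fin 2 → ℝ}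
    (hP : P ∈ attractingCone s) : ‖P‖ ≤ |dominantCoord s P| := by
  rw [attractingCone, Set.mem_ofPred_eq] at hP
  refine (norm_le_max_dominantCoord s P).trans (max_le le_rfl ?_)
  linarith [abs_nonneg (dominantCoord (invLetter s) P)]

theorem norm_le_of_mem_transverseCone {s : Fin 2 × Bool} {Q : Fin 2 → ℝ}
    (hQ : Q ∈ transverseCone s) : ‖Q‖ ≤ 3 * |dominantCoord (invLetter s) Q| := by
  rw [transverseCone, Set.mem_ofPred_eq] at hQ
  refine (norm_le_max_dominantCoord s Q).trans (max_le hQ.le ?_)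
  linarith [abs_nonneg (dominantCoord (invLetter s) Q)]

section Transverse

variable {s : Fin 2 × Bool} {P Q : Fin 2 → ℝ}

theorem dominantCoord_mul_ne_zero (hP : P ∈ attractingCone s) (hQ : Q ∈ transverseCone s) :
    dominantCoord s P * dominantCoord (invLetter s) Q ≠ 0 := by
  rw [attractingCone, Set.mem_ofPred_eq] at hP
  rw [transverseCone, Set.mem_ofPred_eq] at hQ
  have hP' : 0 < |dominantCoord s P| := hP.trans_le' (by positivity)
  have hQ' : 0 < 3 * |dominantCoord (invLetter s) Q| := hQ.trans_le' (abs_nonneg _)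
  exact mul_ne_zero (abs_pos.1 hP') (abs_pos.1 (by linarith))

theorem five_mul_abs_dominantCoord_mul_le (hP : P ∈ attractingCone s)
    (hQ : Q ∈ transverseCone s) :
    5 * |dominantCoord (invLetter s) P * dominantCoord s Q| ≤
      3 * |dominantCoord s P * dominantCoord (invLetter s) Q| := by
  rw [attractingCone, Set.mem_ofPred_eq] at hP
  rw [transverseCone, Set.mem_ofPred_eq] at hQ
  rw [abs_mul, abs_mul]
  calc 5 * (|dominantCoord (invLetter s) P| * |dominantCoord s Q|)
      = 5 * |dominantCoord (invLetter s) P| * |dominantCoord s Q| := by ring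
    _ ≤ |dominantCoord s P| * (3 * |dominantCoord (invLetter s) Q|) := by gcongr
    _ = 3 * (|dominantCoord s P| * |dominantCoord (invLetter s) Q|) := by ring

theorem quarter_le_add_div_sub {X Y : ℝ} (hX : X ≠ 0) (h : 5 * |Y| ≤ 3 * |X|) :
    1 / 4 ≤ (X + Y) / (X - Y) := by
  rcases hX.lt_or_gt with hneg | hpos
  · rw [abs_of_neg hneg] at h
    have hY := abs_le.1 (show |Y| ≤ 3 / 5 * -X by linarith)
    rw [le_div_iff_of_neg (by linarith)]
    linarith
  · rw [abs_of_pos hpos] at h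
    have hY := abs_le.1 (show |Y| ≤ 3 / 5 * X by linarith)
    rw [le_div_iff₀ (by linarith)]
    linarith

theorem quarter_le_margulisRatio_letterTranslation (hP : P ∈ attractingCone s)
    (hQ : Q ∈ transverseCone s) :
    1 / 4 ≤ margulisRatio (letterTranslation neutralForm s) P Q := by
  rw [margulisRatio, ← mul_div_mul_left _ (area P Q) (frameDet_ne_zero s), frameDet_mul_polar,
    frameDet_mul_area]
  exact quarter_le_add_div_sub (dominantCoord_mul_ne_zero hP hQ)
    (five_mul_abs_dominantCoord_mul_le hP hQ)

theorem abs_dominantCoord_mul_le_area (hP : P ∈ attractingCone s) (hQ : Q ∈ transverseCone s) :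
    |dominantCoord s P * dominantCoord (invLetter s) Q| ≤ 5 * |area P Q| := by
  have hdet : |frameDet s * area P Q| ≤ 2 * |area P Q| := by
    rw [abs_mul]
    gcongr
    exact abs_frameDet_le s
  rw [frameDet_mul_area] at hdet
  have htri := abs_sub_abs_le_abs_sub (dominantCoord s P * dominantCoord (invLetter s) Q)
    (dominantCoord (invLetter s) P * dominantCoord s Q)
  linarith [five_mul_abs_dominantCoord_mul_le hP hQ]

theorem abs_margulisRatio_le (x : Fin 3 → ℝ) (hP : P ∈ attractingCone s)
    (hQ : Q ∈ transverseCone s) : |margulisRatio x P Q| ≤ 60 * ‖x‖ := by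
  have hnorm : ‖P‖ * ‖Q‖ ≤ 15 * |area P Q| :=
    calc ‖P‖ * ‖Q‖
        ≤ |dominantCoord s P| * (3 * |dominantCoord (invLetter s) Q|) :=
          mul_le_mul (norm_le_of_mem_attractingCone hP) (norm_le_of_mem_transverseCone hQ)
            (norm_nonneg _) (abs_nonneg _)
      _ = 3 * |dominantCoord s P * dominantCoord (invLetter s) Q| := by rw [abs_mul]; ring
      _ ≤ 15 * |area P Q| := by linarith [abs_dominantCoord_mul_le_area hP hQ]
  rw [margulisRatio, abs_div]
  refine div_le_of_le_mul₀ (abs_nonneg _) (by positivity) ?_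
  calc |polar x P Q| ≤ 4 * ‖x‖ * (‖P‖ * ‖Q‖) := abs_polar_le x P Q
    _ ≤ 4 * ‖x‖ * (15 * |area P Q|) := by gcongr
    _ = 60 * ‖x‖ * |area P Q| := by ring

end Transverse

end Generators

section Action

/-- The affine action of the free group `F₂` on forms whose generators have linear parts `generator`
and translate along `neutralForm`. -/
noncomputable def margulisAction : FreeGroup (Fin 2) →* ((Fin 3 → ℝ) ≃ᵃ[ℝ] (Fin 3 → ℝ)) :=
  affineLift (fun i ↦ formAut (generator i)) neutralForm

theorem gainsPerLetter_margulisRatio (x : Fin 3 → ℝ) :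
    GainsPerLetter (FreeGroup.lift generator) attractingCone transverseCone
      (fun γ P Q ↦ margulisRatio (margulisAction γ x) P Q) (1 / 4) := by
  intro γ s P Q hP hQ
  beta_reduce
  rw [margulisAction, margulisRatio_affineLift formAut_neutralForm]
  gcongr
  exact quarter_le_margulisRatio_letterTranslation hP hQ

theorem norm_le_of_norm_margulisAction_le {x : Fin 3 → ℝ} {γ : FreeGroup (Fin 2)} {M : ℝ}
    (hx : ‖x‖ ≤ M) (hγx : ‖margulisAction γ x‖ ≤ M) : γ.norm ≤ 480 * M := by
  have hM : 0 ≤ M := (norm_nonneg x).trans hx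
  suffices γ.norm * (1 / 4 : ℝ) ≤ 2 * (60 * M) by linarith
  refine isPingPong_generator.norm_mul_le (by positivity) basePoint_mem_transverseCone
    (gainsPerLetter_margulisRatio x) (fun s P hP ↦ ?_) γ (fun s P hP ↦ ?_)
  · have hle := abs_margulisRatio_le x hP (basePoint_mem_transverseCone s)
    rw [map_one, AffineEquiv.coe_one, id, margulisRatio_swap]
    linarith [(abs_le.1 hle).2]
  · have hle := abs_margulisRatio_le (margulisAction γ x) hP (basePoint_mem_transverseCone s)
    linarith [(abs_le.1 hle).2]

theorem finite_margulisAction_image_inter {K : Set (Fin 3 → ℝ)} (hK : Bornology.IsBounded K) :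
    {γ | (margulisAction γ '' K ∩ K).Nonempty}.Finite := by
  obtain ⟨M, hM⟩ := hK.exists_norm_le
  obtain ⟨N, hN⟩ := exists_nat_ge (480 * M)
  refine finite_of_norm_le (N := N) ?_
  rintro γ ⟨_, ⟨x, hx, rfl⟩, hγx⟩
  exact_mod_cast (norm_le_of_norm_margulisAction_le (hM x hx) (hM _ hγx)).trans hN

theorem margulisAction_apply_ne_self {γ : FreeGroup (Fin 2)} (hγ : γ ≠ 1) (x : Fin 3 → ℝ) :
    margulisAction γ x ≠ x := by
  have hfin := finite_margulisAction_image_inter (Bornology.isBounded_singleton (x := x))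
  exact apply_ne_self_of_finite margulisAction (by simpa [eq_comm] using hfin) hγ

end Action

end Margulis

/-- **Margulis**: there exists an injective homomorphism `ρ` from the free group `F₂` on two
generators into the affine group `Aff(ℝ³)` such that the resulting action of `F₂` on `ℝ³`
is free and properly discontinuous. -/
theorem margulis_proper_affine_action_of_free_group :
    ∃ ρ : FreeGroup (Fin 2) →* ((Fin 3 → ℝ) ≃ᵃ[ℝ] (Fin 3 → ℝ)),
      Function.Injective ρ ∧
      (∀ γ : FreeGroup (Fin 2), γ ≠ 1 → ∀ x : Fin 3 → ℝ, (ρ γ) x ≠ x) ∧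
      (∀ K : Set (Fin 3 → ℝ), IsCompact K →
        {γ : FreeGroup (Fin 2) | ((ρ γ) '' K ∩ K).Nonempty}.Finite) := by
  have hfree : ∀ γ, γ ≠ 1 → ∀ x, Margulis.margulisAction γ x ≠ x :=
    fun _ ↦ Margulis.margulisAction_apply_ne_self
  have hinj : Function.Injective Margulis.margulisAction :=
    Margulis.injective_of_apply_ne_self _ 0 fun γ hγ ↦ hfree γ hγ 0
  exact ⟨Margulis.margulisAction, hinj, hfree,
    fun _ hK ↦ Margulis.finite_margulisAction_image_inter hK.isBounded⟩
end

section
/- For every n ≥ 1 there exists an injective homomorphism ρ from the free group F₂ on two generators into the affine group Aff(ℝ^{4n−1}) such that the resulting action of F₂ on ℝ^{4n−1} is properly discontinuous and such that the linear part of ρ(γ) lies in SO(2n,2n−1) for every γ ∈ F₂, where SO(2n,2n−1) = {A ∈ SL(4n−1,ℝ) : Aᵀ J A = J} for J the diagonal matrix with 2n entries equal to 1 followed by 2n−1 entries equal to −1. -/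
open Matrix

/-!
If a symmetric form restricts to a Lorentzian form on a 3-dimensional subspace `W`, it is enough to
construct the action on `W = ℝ^{2,1}`: an affine transformation of `W` extends to the whole space by
the identity on the orthogonal complement of `W`, the extension is equivariant for the orthogonal
projection to `W`, and proper discontinuity lifts along equivariant maps.

On `ℝ^{2,1}` two hyperbolic boosts with orthogonal axes, each followed by a unit translation along
its fixed spacelike line, generate a Margulis spacetime. To two lightlike vectors `p`, `q` attach
the functional `F p q x = det (x, p, q) / -⟨p, q⟩`, which satisfies `F (A p) (A q) (A x) = F p q x`
for `A ∈ SO(2,1)`. Ping-pong on caps of the light cone chooses, for every reduced word `w`, a pair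
of uniformly transverse `p`, `q` for which each letter of `w` increases `F` by at least `1 / 10`.
As `|F p q x| ≤ 300 ‖x‖` for such pairs, the length of `w` is at most `3000 (‖x‖ + ‖w x‖)`, so
only finitely many words return a bounded set to itself. Faithfulness is automatic, because a
properly discontinuous action of a torsion-free group has no kernel.
-/

/-- The maps `a g`, for `g : G`, act properly discontinuously on `X`: for each compact set `K`, only
finitely many of them move `K` to a set that meets `K`. No group structure on `G` is required. -/
def ActsProperlyDiscontinuously {G X : Type*} [TopologicalSpace X] (a : G → X → X) : Prop :=
  ∀ K : Set X, IsCompact K → {g : G | (a g '' K ∩ K).Nonempty}.Finite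

namespace ActsProperlyDiscontinuously

theorem of_semiconj {G X Y : Type*} [TopologicalSpace X] [TopologicalSpace Y] {a : G → X → X}
    {b : G → Y → Y} {f : X → Y} (hb : ActsProperlyDiscontinuously b) (hf : Continuous f)
    (hfab : ∀ g, Function.Semiconj f (a g) (b g)) : ActsProperlyDiscontinuously a := by
  intro K hK
  refine (hb (f '' K) (hK.image hf)).subset ?_
  rintro g ⟨_, ⟨x, hx, rfl⟩, hgx⟩
  exact ⟨b g (f x), Set.mem_image_of_mem _ (Set.mem_image_of_mem f hx), a g x, hgx, hfab g x⟩

theorem injective {G k V P : Type*} [Group G] [IsMulTorsionFree G] [Ring k] [AddCommGroup V]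
    [Module k V] [AddTorsor V P] [TopologicalSpace P] {ρ : G →* (P ≃ᵃ[k] P)}
    (hρ : ActsProperlyDiscontinuously fun g => ρ g) : Function.Injective ρ := by
  refine (injective_iff_map_eq_one ρ).2 fun g hg => ?_
  by_contra hne
  obtain ⟨x⟩ : Nonempty P := AddTorsor.nonempty
  have hpow : Function.Injective fun n : ℕ => g ^ n :=
    injective_pow_iff_not_isOfFinOrder.2 (by rwa [isOfFinOrder_iff_eq_one])
  refine Set.infinite_of_injective_forall_mem hpow (fun n => ?_) (hρ {x} isCompact_singleton)
  exact ⟨x, ⟨x, rfl, by simp [hg]⟩, rfl⟩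

end ActsProperlyDiscontinuously

/-! ### Affine transformations preserving a bilinear form -/

section AffineSpecialOrthogonal

variable {ι R : Type*} [Fintype ι] [DecidableEq ι] [CommRing R]

/-- The matrix of the linear part of an affine transformation, as a monoid homomorphism. -/
def linearMatrix : ((ι → R) ≃ᵃ[R] (ι → R)) →* Matrix ι ι R where
  toFun g := LinearMap.toMatrix' g.linear.toLinearMap
  map_one' := LinearMap.toMatrix'_id
  map_mul' _ _ := LinearMap.toMatrix'_comp _ _

theorem linearMatrix_apply (g : (ι → R) ≃ᵃ[R] (ι → R)) :
    linearMatrix g = LinearMap.toMatrix' g.linear.toLinearMap := rfl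

/-- The group `SO(J) ⋉ R^ι` of affine transformations whose linear part has determinant one and
preserves the bilinear form with Gram matrix `J`. -/
def affineSpecialOrthogonal (J : Matrix ι ι R) : Subgroup ((ι → R) ≃ᵃ[R] (ι → R)) where
  carrier := {g | (linearMatrix g)ᵀ * J * linearMatrix g = J ∧ (linearMatrix g).det = 1}
  one_mem' := by simp
  mul_mem' := by
    rintro g h ⟨hg, hg_det⟩ ⟨hh, hh_det⟩
    refine ⟨?_, by rw [map_mul, det_mul, hg_det, hh_det, one_mul]⟩
    calc (linearMatrix (g * h))ᵀ * J * linearMatrix (g * h)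
        = (linearMatrix h)ᵀ * ((linearMatrix g)ᵀ * J * linearMatrix g) * linearMatrix h := by
          simp only [map_mul, transpose_mul, Matrix.mul_assoc]
      _ = J := by rw [hg, hh]
  inv_mem' := by
    rintro g ⟨hg, hg_det⟩
    have hinv : linearMatrix g * linearMatrix g⁻¹ = 1 := by
      rw [← map_mul, mul_inv_cancel, map_one]
    refine ⟨?_, by simpa [hg_det] using congrArg det hinv⟩
    calc (linearMatrix g⁻¹)ᵀ * J * linearMatrix g⁻¹
        = (linearMatrix g⁻¹)ᵀ * ((linearMatrix g)ᵀ * J * linearMatrix g) * linearMatrix g⁻¹ := by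
          rw [hg]
      _ = (linearMatrix g * linearMatrix g⁻¹)ᵀ * J * (linearMatrix g * linearMatrix g⁻¹) := by
          simp only [transpose_mul, Matrix.mul_assoc]
      _ = J := by rw [hinv, transpose_one, Matrix.one_mul, Matrix.mul_one]

end AffineSpecialOrthogonal

section Extension

variable {k V W : Type*} [Ring k] [AddCommGroup V] [Module k V] [AddCommGroup W] [Module k W]

/-- Extension of affine self-maps from a direct summand: `W` is embedded in `V` by `f` with
retraction `π`, and `g` is extended by the identity on `ker π`, that is, to
`v ↦ v + f (g (π v) - π v)`. -/
def affineMapExtension (f : W →ₗ[k] V) (π : V →ₗ[k] W) (hπf : π ∘ₗ f = LinearMap.id) :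
    (W →ᵃ[k] W) →* (V →ᵃ[k] V) where
  toFun g := AffineMap.id k V +
    f.toAffineMap.comp ((g - AffineMap.id k W).comp π.toAffineMap)
  map_one' := by ext; simp
  map_mul' g h := by
    have hπf_apply (w : W) : π (f w) = w := LinearMap.congr_fun hπf w
    ext; simp [hπf_apply, add_assoc]

/-- The restriction of `affineMapExtension` to invertible maps. -/
noncomputable def affineEquivExtension (f : W →ₗ[k] V) (π : V →ₗ[k] W)
    (hπf : π ∘ₗ f = LinearMap.id) : (W ≃ᵃ[k] W) →* (V ≃ᵃ[k] V) :=
  AffineEquiv.equivUnitsAffineMap.symm.toMonoidHom.comp <|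
    (Units.map (affineMapExtension f π hπf)).comp AffineEquiv.equivUnitsAffineMap.toMonoidHom

theorem affineEquivExtension_apply (f : W →ₗ[k] V) (π : V →ₗ[k] W) (hπf : π ∘ₗ f = LinearMap.id)
    (g : W ≃ᵃ[k] W) (v : V) : affineEquivExtension f π hπf g v = v + f (g (π v) - π v) := rfl

theorem linear_affineEquivExtension (f : W →ₗ[k] V) (π : V →ₗ[k] W)
    (hπf : π ∘ₗ f = LinearMap.id) (g : W ≃ᵃ[k] W) :
    (affineEquivExtension f π hπf g).linear.toLinearMap =
      LinearMap.id + f ∘ₗ (g.linear.toLinearMap - LinearMap.id) ∘ₗ π := rfl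

theorem semiconj_affineEquivExtension (f : W →ₗ[k] V) (π : V →ₗ[k] W)
    (hπf : π ∘ₗ f = LinearMap.id) (g : W ≃ᵃ[k] W) :
    Function.Semiconj π (affineEquivExtension f π hπf g) g := fun v => by
  have hπf_apply (w : W) : π (f w) = w := LinearMap.congr_fun hπf w
  simp [affineEquivExtension_apply, hπf_apply]

end Extension

section Frame

variable {ι κ R : Type*} [Fintype ι] [DecidableEq ι] [Fintype κ] [DecidableEq κ] [CommRing R]
  {J : Matrix ι ι R} {η : Matrix κ κ R} {F : Matrix ι κ R} {P : Matrix κ ι R}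

theorem linearMatrix_affineEquivExtension (hPF : toLin' P ∘ₗ toLin' F = LinearMap.id)
    (g : (κ → R) ≃ᵃ[R] (κ → R)) :
    linearMatrix (affineEquivExtension (toLin' F) (toLin' P) hPF g) =
      1 + F * (linearMatrix g - 1) * P := by
  simp [linearMatrix_apply, linear_affineEquivExtension, LinearMap.toMatrix'_comp,
    Matrix.mul_assoc]

theorem det_one_add_mul_sub_one_mul (hPF : P * F = 1) (A : Matrix κ κ R) :
    (1 + F * (A - 1) * P).det = A.det := by
  rw [Matrix.mul_assoc, det_one_add_mul_comm, Matrix.mul_assoc, hPF, Matrix.mul_one,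
    add_sub_cancel]

theorem transpose_mul_mul_one_add_mul_sub_one_mul (hJ : J.IsSymm) (hη : η.IsSymm)
    (hPF : P * F = 1) (hFJ : Fᵀ * J = η * P) {A : Matrix κ κ R} (hA : Aᵀ * η * A = η) :
    (1 + F * (A - 1) * P)ᵀ * J * (1 + F * (A - 1) * P) = J := by
  have hJF : J * F = Pᵀ * η := by
    simpa [hJ.eq, hη.eq, transpose_mul] using congrArg transpose hFJ
  have hFJF : Fᵀ * J * F = η := by rw [hFJ, Matrix.mul_assoc, hPF, Matrix.mul_one]
  calc (1 + F * (A - 1) * P)ᵀ * J * (1 + F * (A - 1) * P)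
      = J + (J * F) * (A - 1) * P + Pᵀ * (A - 1)ᵀ * (Fᵀ * J) +
          Pᵀ * (A - 1)ᵀ * (Fᵀ * J * F) * (A - 1) * P := by
        simp only [transpose_add, transpose_mul, transpose_one, Matrix.mul_add, Matrix.add_mul,
          Matrix.one_mul, Matrix.mul_one, Matrix.mul_assoc]
        abel
    _ = J + Pᵀ * (Aᵀ * η * A - η) * P := by
        rw [hFJF, hJF, hFJ, transpose_sub, transpose_one]
        simp only [Matrix.mul_sub, Matrix.sub_mul, Matrix.mul_one, Matrix.mul_assoc]
        abel
    _ = J := by rw [hA, sub_self, Matrix.mul_zero, Matrix.zero_mul, add_zero]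

theorem exists_equivariant_extension (hJ : J.IsSymm) (hη : IsUnit η.det) (hF : Fᵀ * J * F = η) :
    ∃ (Φ : ((κ → R) ≃ᵃ[R] (κ → R)) →* ((ι → R) ≃ᵃ[R] (ι → R))) (π : (ι → R) →ₗ[R] (κ → R)),
      (∀ g, Function.Semiconj π (Φ g) g) ∧
      ∀ g ∈ affineSpecialOrthogonal η, Φ g ∈ affineSpecialOrthogonal J := by
  -- The orthogonal projection onto the span of the columns of `F`, in the coordinates they give.
  let P : Matrix κ ι R := η⁻¹ * (Fᵀ * J)
  have hPF : P * F = 1 := by rw [Matrix.mul_assoc, hF, nonsing_inv_mul η hη]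
  have hFJ : Fᵀ * J = η * P := (mul_nonsing_inv_cancel_left η _ hη).symm
  have hη_symm : η.IsSymm := by
    rw [IsSymm, ← hF, transpose_mul, transpose_mul, transpose_transpose, hJ.eq, Matrix.mul_assoc]
  have hPF_lin : toLin' P ∘ₗ toLin' F = LinearMap.id := by rw [← toLin'_mul, hPF, toLin'_one]
  refine ⟨affineEquivExtension (toLin' F) (toLin' P) hPF_lin, toLin' P,
    semiconj_affineEquivExtension _ _ hPF_lin, fun g ⟨hg, hg_det⟩ => ⟨?_, ?_⟩⟩
  · rw [linearMatrix_affineEquivExtension]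
    exact transpose_mul_mul_one_add_mul_sub_one_mul hJ hη_symm hPF hFJ hg
  · rw [linearMatrix_affineEquivExtension, det_one_add_mul_sub_one_mul hPF, hg_det]

end Frame

theorem transpose_submatrix_one_mul_diagonal_mul {ι κ R : Type*} [Fintype ι] [DecidableEq ι]
    [DecidableEq κ] [CommRing R] {e : κ → ι} (he : Function.Injective e) (d : ι → R) :
    ((1 : Matrix ι ι R).submatrix id e)ᵀ * diagonal d * (1 : Matrix ι ι R).submatrix id e =
      diagonal (d ∘ e) := by
  ext i j
  obtain rfl | hij := eq_or_ne i j <;> simp [mul_apply, one_apply, diagonal_apply, he.eq_iff, *]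

theorem dotProduct_mulVec_mulVec_of_isometry {κ R : Type*} [Fintype κ] [CommRing R]
    {η A : Matrix κ κ R} (hA : Aᵀ * η * A = η) (p q : κ → R) :
    (A *ᵥ p) ⬝ᵥ η *ᵥ (A *ᵥ q) = p ⬝ᵥ η *ᵥ q := by
  rw [mulVec_mulVec, dotProduct_mulVec, ← vecMul_transpose, vecMul_vecMul, ← dotProduct_mulVec,
    ← Matrix.mul_assoc, hA]

theorem triple_product_mulVec {R : Type*} [CommRing R] (A : Matrix (Fin 3) (Fin 3) R)
    (x p q : Fin 3 → R) :
    (A *ᵥ x) ⬝ᵥ ((A *ᵥ p) ⨯₃ (A *ᵥ q)) = A.det * (x ⬝ᵥ (p ⨯₃ q)) := by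
  have hrows : of ![A *ᵥ x, A *ᵥ p, A *ᵥ q] = of ![x, p, q] * Aᵀ := by
    ext i j
    fin_cases i <;> simp [mul_apply, mulVec, dotProduct, mul_comm]
  calc (A *ᵥ x) ⬝ᵥ ((A *ᵥ p) ⨯₃ (A *ᵥ q))
      = (of ![A *ᵥ x, A *ᵥ p, A *ᵥ q]).det := triple_product_eq_det _ _ _
    _ = A.det * (of ![x, p, q]).det := by rw [hrows, det_mul, det_transpose, mul_comm]
    _ = A.det * (x ⬝ᵥ (p ⨯₃ q)) := by rw [triple_product_eq_det]; rfl

theorem exists_isReduced_cons {α : Type*} [Nonempty α] {L : List (α × Bool)}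
    (hL : FreeGroup.IsReduced L) : ∃ s, FreeGroup.IsReduced (s :: L) := by
  cases L with
  | nil => exact ⟨(Classical.arbitrary α, true), FreeGroup.IsReduced.singleton⟩
  | cons r L => exact ⟨r, FreeGroup.isReduced_cons_cons.2 ⟨fun _ => rfl, hL⟩⟩

namespace MargulisSpacetime

/-! ### The Margulis functional -/

/-- The Gram matrix of the Lorentzian form of `ℝ^{2,1}`, the last coordinate being time. -/
abbrev minkowski : Matrix (Fin 3) (Fin 3) ℝ := diagonal ![1, 1, -1]

theorem dotProduct_minkowski_mulVec (p q : Fin 3 → ℝ) :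
    p ⬝ᵥ minkowski *ᵥ q = p 0 * q 0 + p 1 * q 1 - p 2 * q 2 := by
  simp [mulVec_diagonal, dotProduct, Fin.sum_univ_three, sub_eq_add_neg]

/-- The functional `x ↦ det (x, p, q) / -⟨p, q⟩`, which measures the component of `x` along the
spacelike line orthogonal to two lightlike vectors `p` and `q`. It is zero by the convention for
division if `⟨p, q⟩ = 0`. -/
noncomputable def margulisFunctional (p q x : Fin 3 → ℝ) : ℝ :=
  x ⬝ᵥ (p ⨯₃ q) / -(p ⬝ᵥ minkowski *ᵥ q)

theorem margulisFunctional_add (p q x y : Fin 3 → ℝ) :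
    margulisFunctional p q (x + y) = margulisFunctional p q x + margulisFunctional p q y := by
  simp only [margulisFunctional, add_dotProduct, add_div]

theorem margulisFunctional_mulVec {A : Matrix (Fin 3) (Fin 3) ℝ}
    (hA : Aᵀ * minkowski * A = minkowski) (hA_det : A.det = 1) (p q x : Fin 3 → ℝ) :
    margulisFunctional (A *ᵥ p) (A *ᵥ q) (A *ᵥ x) = margulisFunctional p q x := by
  rw [margulisFunctional, margulisFunctional, triple_product_mulVec, hA_det, one_mul,
    dotProduct_mulVec_mulVec_of_isometry hA]

/-! ### The light cone and its caps -/

/-- The Euclidean inner product of `u` with the spatial part of `p`. -/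
def spatialDot (u : Fin 2 → ℝ) (p : Fin 3 → ℝ) : ℝ := u 0 * p 0 + u 1 * p 1

theorem spatialDot_neg (u : Fin 2 → ℝ) (p : Fin 3 → ℝ) : spatialDot (-u) p = -spatialDot u p := by
  simp only [spatialDot, Pi.neg_apply]; ring

/-- The nonzero future-pointing lightlike vectors of `ℝ^{2,1}`. -/
def futureCone : Set (Fin 3 → ℝ) := {p | p 0 ^ 2 + p 1 ^ 2 = p 2 ^ 2 ∧ 0 < p 2}

/-- The vectors of the light cone whose spatial part makes an angle of cosine at least `4 / 5` with
the unit vector `u`. -/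
def cap (u : Fin 2 → ℝ) : Set (Fin 3 → ℝ) := {p ∈ futureCone | 4 / 5 * p 2 ≤ spatialDot u p}

/-- The vectors of the light cone whose spatial part makes an angle of cosine at most `3 / 5` with
the unit vector `u`. The caps about the directions orthogonal to `u` just fit into this set. -/
def awayCap (u : Fin 2 → ℝ) : Set (Fin 3 → ℝ) := {p ∈ futureCone | spatialDot u p ≤ 3 / 5 * p 2}

variable {u w : Fin 2 → ℝ} {p q : Fin 3 → ℝ}

theorem mem_futureCone_iff : p ∈ futureCone ↔ p ⬝ᵥ minkowski *ᵥ p = 0 ∧ 0 < p 2 := by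
  rw [dotProduct_minkowski_mulVec]
  refine and_congr_left fun _ => ⟨fun h => ?_, fun h => ?_⟩ <;> linear_combination h

theorem abs_apply_le_of_mem_futureCone (hp : p ∈ futureCone) (i : Fin 3) : |p i| ≤ p 2 := by
  obtain ⟨hnull, hpos⟩ := hp
  refine abs_le_of_sq_le_sq ?_ hpos.le
  match i with
  | 0 => linarith [sq_nonneg (p 1)]
  | 1 => linarith [sq_nonneg (p 0)]
  | 2 => exact le_rfl

theorem vecCons_mem_cap (hu : u ⬝ᵥ u = 1) : ![u 0, u 1, 1] ∈ cap u := by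
  simp only [dotProduct, Fin.sum_univ_two] at hu
  refine ⟨⟨?_, ?_⟩, ?_⟩ <;> simp [spatialDot] <;> linarith

theorem cap_subset_awayCap (hu : u ⬝ᵥ u = 1) (hw : w ⬝ᵥ w = 1) (huw : u ⬝ᵥ w ≤ 0) :
    cap w ⊆ awayCap u := by
  rintro p ⟨⟨hnull, hpos⟩, hcap⟩
  refine ⟨⟨hnull, hpos⟩, ?_⟩
  simp only [dotProduct, Fin.sum_univ_two] at hu hw huw
  unfold spatialDot at *
  -- Coordinates of `p` in the orthonormal basis consisting of `w` and its rotation by `-π / 2`.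
  set pw := w 0 * p 0 + w 1 * p 1
  set qw := w 1 * p 0 - w 0 * p 1
  have hpw : pw ^ 2 + qw ^ 2 = p 2 ^ 2 := by
    linear_combination (p 0 ^ 2 + p 1 ^ 2) * hw + hnull
  have hqw : |qw| ≤ 3 / 5 * p 2 := abs_le_of_sq_le_sq (by nlinarith) (by positivity)
  have huw_sq : (u 0 * w 0 + u 1 * w 1) ^ 2 + (u 0 * w 1 - u 1 * w 0) ^ 2 = 1 := by
    linear_combination (w 0 ^ 2 + w 1 ^ 2) * hu + hw
  have hcross : |u 0 * w 1 - u 1 * w 0| ≤ 1 := abs_le_of_sq_le_sq (by nlinarith) zero_le_one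
  calc u 0 * p 0 + u 1 * p 1
      = (u 0 * w 0 + u 1 * w 1) * pw + (u 0 * w 1 - u 1 * w 0) * qw := by
        linear_combination -(u 0 * p 0 + u 1 * p 1) * hw
    _ ≤ 0 + 1 * (3 / 5 * p 2) := by
        refine add_le_add (mul_nonpos_of_nonpos_of_nonneg huw (by linarith)) ?_
        refine (le_abs_self _).trans ?_
        rw [abs_mul]
        gcongr
    _ = 3 / 5 * p 2 := by ring

theorem cap_subset_awayCap_neg (hu : u ⬝ᵥ u = 1) (hw : w ⬝ᵥ w = 1) (huw : 0 ≤ u ⬝ᵥ w) :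
    cap w ⊆ awayCap (-u) :=
  cap_subset_awayCap (by simpa using hu) hw (by rwa [neg_dotProduct, neg_nonpos])

theorem cap_neg_subset_awayCap (hu : u ⬝ᵥ u = 1) (hw : w ⬝ᵥ w = 1) (huw : 0 ≤ u ⬝ᵥ w) :
    cap (-u) ⊆ awayCap w :=
  cap_subset_awayCap hw (by simpa using hu) (by rwa [dotProduct_neg, dotProduct_comm, neg_nonpos])

theorem neg_dotProduct_minkowski_mulVec_le (hp : p ∈ futureCone) (hq : q ∈ futureCone) :
    -(p ⬝ᵥ minkowski *ᵥ q) ≤ 2 * (p 2 * q 2) := by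
  rw [dotProduct_minkowski_mulVec]
  obtain ⟨hp_null, hp_pos⟩ := hp
  obtain ⟨hq_null, hq_pos⟩ := hq
  have hcauchy : -(p 0 * q 0 + p 1 * q 1) ≤ p 2 * q 2 := by
    refine neg_le_of_neg_le (neg_le_of_abs_le (abs_le_of_sq_le_sq ?_ (by positivity)))
    rw [mul_pow, ← hp_null, ← hq_null]
    linarith [sq_nonneg (p 0 * q 1 - p 1 * q 0)]
  linarith

/-! ### Bounds for the Margulis functional -/

/-- The spatial unit vector obtained from `u` by rotation through `π / 2`. It spans the line fixed
by the boosts in direction `u`. -/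
def quarterTurn (u : Fin 2 → ℝ) : Fin 3 → ℝ := ![-u 1, u 0, 0]

theorem quarterTurn_dotProduct_cross (u : Fin 2 → ℝ) (p q : Fin 3 → ℝ) :
    quarterTurn u ⬝ᵥ (p ⨯₃ q) = p 2 * spatialDot u q - q 2 * spatialDot u p := by
  simp only [quarterTurn, cross_apply, dotProduct, Fin.sum_univ_three, spatialDot, cons_val]
  ring

theorem div_five_le_quarterTurn_dotProduct_cross (hp : p ∈ awayCap u) (hq : q ∈ cap u) :
    p 2 * q 2 / 5 ≤ quarterTurn u ⬝ᵥ (p ⨯₃ q) := by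
  rw [quarterTurn_dotProduct_cross]
  linarith [mul_le_mul_of_nonneg_left hq.2 hp.1.2.le, mul_le_mul_of_nonneg_left hp.2 hq.1.2.le]

theorem sq_quarterTurn_dotProduct_cross_le (hu : u ⬝ᵥ u = 1) (hp : p ∈ futureCone)
    (hq : q ∈ futureCone) :
    (quarterTurn u ⬝ᵥ (p ⨯₃ q)) ^ 2 ≤ 2 * (p 2 * q 2) * -(p ⬝ᵥ minkowski *ᵥ q) := by
  simp only [dotProduct, Fin.sum_univ_two] at hu
  rw [dotProduct_minkowski_mulVec, quarterTurn_dotProduct_cross]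
  unfold spatialDot
  calc (p 2 * (u 0 * q 0 + u 1 * q 1) - q 2 * (u 0 * p 0 + u 1 * p 1)) ^ 2
      ≤ (u 0 * u 0 + u 1 * u 1) *
          ((p 2 * q 0 - q 2 * p 0) ^ 2 + (p 2 * q 1 - q 2 * p 1) ^ 2) := by
        linarith [sq_nonneg (u 0 * (p 2 * q 1 - q 2 * p 1) - u 1 * (p 2 * q 0 - q 2 * p 0))]
    _ = 2 * (p 2 * q 2) * -(p 0 * q 0 + p 1 * q 1 - p 2 * q 2) := by
        rw [hu]
        linear_combination q 2 ^ 2 * hp.1 + p 2 ^ 2 * hq.1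

theorem div_fifty_le_neg_dotProduct_minkowski_mulVec (hu : u ⬝ᵥ u = 1) (hp : p ∈ awayCap u)
    (hq : q ∈ cap u) : p 2 * q 2 / 50 ≤ -(p ⬝ᵥ minkowski *ᵥ q) := by
  have hpq : 0 < p 2 * q 2 := mul_pos hp.1.2 hq.1.2
  have hsq : (p 2 * q 2 / 5) ^ 2 ≤ 2 * (p 2 * q 2) * -(p ⬝ᵥ minkowski *ᵥ q) :=
    (pow_le_pow_left₀ (by positivity) (div_five_le_quarterTurn_dotProduct_cross hp hq) 2).trans
      (sq_quarterTurn_dotProduct_cross_le hu hp.1 hq.1)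
  refine le_of_mul_le_mul_left ?_ hpq
  linarith

theorem one_div_ten_le_margulisFunctional_quarterTurn (hu : u ⬝ᵥ u = 1) (hp : p ∈ awayCap u)
    (hq : q ∈ cap u) : 1 / 10 ≤ margulisFunctional p q (quarterTurn u) := by
  have hpq : 0 < p 2 * q 2 := mul_pos hp.1.2 hq.1.2
  have hlower := div_fifty_le_neg_dotProduct_minkowski_mulVec hu hp hq
  have hupper := neg_dotProduct_minkowski_mulVec_le hp.1 hq.1
  have htriple := div_five_le_quarterTurn_dotProduct_cross hp hq
  rw [margulisFunctional, le_div_iff₀ (by linarith)]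
  linarith

theorem abs_triple_product_le (hp : p ∈ futureCone) (hq : q ∈ futureCone) (x : Fin 3 → ℝ) :
    |x ⬝ᵥ (p ⨯₃ q)| ≤ 6 * ‖x‖ * (p 2 * q 2) := by
  have hmul (i j : Fin 3) : |p i * q j| ≤ p 2 * q 2 := by
    rw [abs_mul]
    exact mul_le_mul (abs_apply_le_of_mem_futureCone hp i) (abs_apply_le_of_mem_futureCone hq j)
      (abs_nonneg _) hp.2.le
  have hminor (i j : Fin 3) : |p i * q j - p j * q i| ≤ 2 * (p 2 * q 2) := by
    linarith [abs_sub (p i * q j) (p j * q i), hmul i j, hmul j i]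
  have hcross (i : Fin 3) : |(p ⨯₃ q) i| ≤ 2 * (p 2 * q 2) := by
    fin_cases i <;> exact hminor _ _
  calc |x ⬝ᵥ (p ⨯₃ q)| ≤ ∑ i, |x i * (p ⨯₃ q) i| := Finset.abs_sum_le_sum_abs _ _
    _ ≤ ∑ _i : Fin 3, ‖x‖ * (2 * (p 2 * q 2)) := by
        gcongr with i
        rw [abs_mul]
        exact mul_le_mul (norm_le_pi_norm x i) (hcross i) (abs_nonneg _) (norm_nonneg x)
    _ = 6 * ‖x‖ * (p 2 * q 2) := by
        rw [Fin.sum_const, nsmul_eq_mul]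
        push_cast
        ring

theorem abs_margulisFunctional_le (hu : u ⬝ᵥ u = 1) (hp : p ∈ awayCap u) (hq : q ∈ cap u)
    (x : Fin 3 → ℝ) : |margulisFunctional p q x| ≤ 300 * ‖x‖ := by
  have hpq : 0 < p 2 * q 2 := mul_pos hp.1.2 hq.1.2
  have hlower := div_fifty_le_neg_dotProduct_minkowski_mulVec hu hp hq
  have hpos : 0 < -(p ⬝ᵥ minkowski *ᵥ q) := by linarith
  rw [margulisFunctional, abs_div, abs_of_pos hpos, div_le_iff₀ hpos]
  calc |x ⬝ᵥ (p ⨯₃ q)| ≤ 6 * ‖x‖ * (p 2 * q 2) := abs_triple_product_le hp.1 hq.1 x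
    _ = 300 * ‖x‖ * (p 2 * q 2 / 50) := by ring
    _ ≤ 300 * ‖x‖ * -(p ⬝ᵥ minkowski *ᵥ q) := by gcongr

/-! ### Affine boosts -/

/-- The Lorentz boost of rapidity `log 9` in the direction of the unit vector `u`: the hyperbolic
cosine and sine are `41 / 9` and `40 / 9`. This is the rapidity for which the complement of
`cap (-u)` in the light cone is mapped onto the interior of `cap u`. -/
noncomputable def boost (u : Fin 2 → ℝ) : Matrix (Fin 3) (Fin 3) ℝ :=
  !![1 + 32 / 9 * u 0 ^ 2, 32 / 9 * u 0 * u 1, 40 / 9 * u 0;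
     32 / 9 * u 0 * u 1, 1 + 32 / 9 * u 1 ^ 2, 40 / 9 * u 1;
     40 / 9 * u 0, 40 / 9 * u 1, 41 / 9]

theorem det_boost (hu : u ⬝ᵥ u = 1) : (boost u).det = 1 := by
  simp only [dotProduct, Fin.sum_univ_two] at hu
  simp only [boost, det_fin_three, of_apply, cons_val', cons_val]
  linear_combination (-32 / 9) * hu

theorem boost_isometry (hu : u ⬝ᵥ u = 1) : (boost u)ᵀ * minkowski * boost u = minkowski := by
  simp only [dotProduct, Fin.sum_univ_two] at hu
  ext i j
  fin_cases i <;> fin_cases j <;> simp [mul_apply, boost, Fin.sum_univ_three] <;> grind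

theorem boost_mul_boost_neg (hu : u ⬝ᵥ u = 1) : boost u * boost (-u) = 1 := by
  simp only [dotProduct, Fin.sum_univ_two] at hu
  ext i j
  fin_cases i <;> fin_cases j <;> simp [mul_apply, boost, Fin.sum_univ_three] <;> grind

theorem boost_mulVec_quarterTurn (u : Fin 2 → ℝ) : boost u *ᵥ quarterTurn u = quarterTurn u := by
  ext i
  fin_cases i <;> simp [boost, mulVec, dotProduct, Fin.sum_univ_three, quarterTurn] <;> ring

theorem boost_mulVec_two (u : Fin 2 → ℝ) (p : Fin 3 → ℝ) :
    (boost u *ᵥ p) 2 = 40 / 9 * spatialDot u p + 41 / 9 * p 2 := by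
  simp only [boost, mulVec, dotProduct, Fin.sum_univ_three, spatialDot, of_apply, cons_val',
    cons_val]
  ring

theorem spatialDot_boost_mulVec (hu : u ⬝ᵥ u = 1) (p : Fin 3 → ℝ) :
    spatialDot u (boost u *ᵥ p) = 41 / 9 * spatialDot u p + 40 / 9 * p 2 := by
  simp only [dotProduct, Fin.sum_univ_two] at hu
  simp only [boost, mulVec, dotProduct, Fin.sum_univ_three, spatialDot, of_apply, cons_val',
    cons_val]
  linear_combination (32 / 9 * (u 0 * p 0 + u 1 * p 1) + 40 / 9 * p 2) * hu

theorem boost_mulVec_mem_cap (hu : u ⬝ᵥ u = 1) (hp : p ∈ awayCap (-u)) : boost u *ᵥ p ∈ cap u := by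
  obtain ⟨hcone, haway⟩ := hp
  rw [spatialDot_neg] at haway
  have hpos : 0 < p 2 := hcone.2
  refine ⟨mem_futureCone_iff.2 ⟨?_, ?_⟩, ?_⟩
  · rw [dotProduct_mulVec_mulVec_of_isometry (boost_isometry hu)]
    exact (mem_futureCone_iff.1 hcone).1
  · rw [boost_mulVec_two]
    linarith
  · rw [boost_mulVec_two, spatialDot_boost_mulVec hu]
    linarith

theorem boost_neg_mulVec_mem_cap (hu : u ⬝ᵥ u = 1) (hp : p ∈ awayCap u) :
    boost (-u) *ᵥ p ∈ cap (-u) :=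
  boost_mulVec_mem_cap (by simpa using hu) (by rwa [neg_neg])

/-- The boost in direction `u` followed by the unit translation along its fixed line. -/
noncomputable def affineBoost (hu : u ⬝ᵥ u = 1) : (Fin 3 → ℝ) ≃ᵃ[ℝ] (Fin 3 → ℝ) :=
  AffineEquiv.constVAdd ℝ _ (quarterTurn u) *
    (SpecialLinearGroup.toLin' ⟨boost u, det_boost hu⟩).toAffineEquiv

theorem affineBoost_apply (hu : u ⬝ᵥ u = 1) (x : Fin 3 → ℝ) :
    affineBoost hu x = boost u *ᵥ x + quarterTurn u := add_comm _ _

theorem linearMatrix_affineBoost (hu : u ⬝ᵥ u = 1) : linearMatrix (affineBoost hu) = boost u :=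
  LinearMap.toMatrix'_toLin' (boost u)

theorem affineBoost_mem_affineSpecialOrthogonal (hu : u ⬝ᵥ u = 1) :
    affineBoost hu ∈ affineSpecialOrthogonal minkowski := by
  constructor <;> rw [linearMatrix_affineBoost]
  exacts [boost_isometry hu, det_boost hu]

theorem affineBoost_eq_inv_of_eq_neg (hu : u ⬝ᵥ u = 1) (hw : w ⬝ᵥ w = 1) (hwu : w = -u) :
    affineBoost hw = (affineBoost hu)⁻¹ := by
  subst hwu
  refine eq_inv_of_mul_eq_one_right (AffineEquiv.ext fun x => ?_)
  have hturn : quarterTurn (-u) = -quarterTurn u := by simp [quarterTurn]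
  simp [affineBoost_apply, mulVec_add, boost_mul_boost_neg hu, hturn, mulVec_neg,
    boost_mulVec_quarterTurn]

theorem margulisFunctional_add_le_margulisFunctional_affineBoost (hu : u ⬝ᵥ u = 1)
    (hp : p ∈ awayCap u) (hq : q ∈ awayCap (-u)) (x : Fin 3 → ℝ) :
    margulisFunctional (boost (-u) *ᵥ p) q x + 1 / 10 ≤
      margulisFunctional p (boost u *ᵥ q) (affineBoost hu x) := by
  have hp_eq : boost u *ᵥ (boost (-u) *ᵥ p) = p := by
    rw [mulVec_mulVec, boost_mul_boost_neg hu, one_mulVec]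
  have hinv := margulisFunctional_mulVec (boost_isometry hu) (det_boost hu) (boost (-u) *ᵥ p) q x
  rw [hp_eq] at hinv
  rw [affineBoost_apply, margulisFunctional_add, hinv]
  gcongr
  exact one_div_ten_le_margulisFunctional_quarterTurn hu hp (boost_mulVec_mem_cap hu hq)

/-! ### The action of the free group on `ℝ^{2,1}` -/

/-- The unit vector in whose direction the letter `s` boosts. As in `FreeGroup.mk`, the letter
`(i, true)` is the `i`-th generator and `(i, false)` its inverse. -/
def direction (s : Fin 2 × Bool) : Fin 2 → ℝ := Pi.single s.1 (if s.2 then 1 else -1)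

theorem direction_dotProduct_self (s : Fin 2 × Bool) : direction s ⬝ᵥ direction s = 1 := by
  obtain ⟨i, b⟩ := s
  cases b <;> simp [direction]

theorem direction_false (i : Fin 2) : direction (i, false) = -direction (i, true) := by
  simp [direction, ← Pi.single_neg]

theorem direction_dotProduct_nonneg {s t : Fin 2 × Bool} (hst : s.1 = t.1 → s.2 = t.2) :
    0 ≤ direction s ⬝ᵥ direction t := by
  by_cases h : s.1 = t.1
  · rw [Prod.ext h (hst h), direction_dotProduct_self]
    exact zero_le_one
  · simp [direction, h]

/-- The affine action of the free group on `ℝ^{2,1}` in which the two generators act by affine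
boosts in the two coordinate directions. -/
noncomputable def margulisRep : FreeGroup (Fin 2) →* ((Fin 3 → ℝ) ≃ᵃ[ℝ] (Fin 3 → ℝ)) :=
  FreeGroup.lift fun i => affineBoost (direction_dotProduct_self (i, true))

theorem margulisRep_mem_affineSpecialOrthogonal (γ : FreeGroup (Fin 2)) :
    margulisRep γ ∈ affineSpecialOrthogonal minkowski := by
  induction γ using FreeGroup.induction_on with
  | C1 => rw [map_one]; exact one_mem _
  | of i =>
    rw [margulisRep, FreeGroup.lift_apply_of]
    exact affineBoost_mem_affineSpecialOrthogonal _
  | inv_of i hi => rw [map_inv]; exact inv_mem hi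
  | mul γ δ hγ hδ => rw [map_mul]; exact mul_mem hγ hδ

theorem margulisRep_mk_cons_apply (s : Fin 2 × Bool) (L : List (Fin 2 × Bool)) (x : Fin 3 → ℝ) :
    margulisRep (FreeGroup.mk (s :: L)) x =
      affineBoost (direction_dotProduct_self s) (margulisRep (FreeGroup.mk L) x) := by
  rw [margulisRep, FreeGroup.lift_mk, FreeGroup.lift_mk, List.map_cons, List.prod_cons,
    AffineEquiv.mul_def, AffineEquiv.trans_apply]
  congr 1
  obtain ⟨i, _ | _⟩ := s
  exacts [(affineBoost_eq_inv_of_eq_neg _ _ (direction_false i)).symm, rfl]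

/-- Ping-pong. The letter `s`, read before `L`, keeps `p` transverse to the first letter of `L`; the
induction pulls `p` back and pushes `q` forward through the letters of `L`. -/
theorem exists_mem_cap_le_margulisFunctional {L : List (Fin 2 × Bool)} {s : Fin 2 × Bool}
    (hL : FreeGroup.IsReduced (s :: L)) (hp : p ∈ cap (-direction s)) :
    ∃ w, w ⬝ᵥ w = 1 ∧ 0 ≤ direction s ⬝ᵥ w ∧ ∃ q ∈ cap w, ∀ x, (L.length : ℝ) / 10 - 300 * ‖x‖ ≤
      margulisFunctional p q (margulisRep (FreeGroup.mk L) x) := by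
  induction L generalizing s p with
  | nil =>
    have hu := direction_dotProduct_self s
    refine ⟨direction s, hu, hu.symm ▸ zero_le_one, _, vecCons_mem_cap hu, fun x => ?_⟩
    have hp_away := cap_neg_subset_awayCap hu hu (hu.symm ▸ zero_le_one) hp
    have hbound := neg_le_of_abs_le (abs_margulisFunctional_le hu hp_away (vecCons_mem_cap hu) x)
    rw [← FreeGroup.one_eq_mk, map_one, AffineEquiv.coe_one, id, List.length_nil]
    push_cast
    linarith
  | cons r L ih =>
    obtain ⟨hsr, hrL⟩ := FreeGroup.isReduced_cons_cons.1 hL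
    have hv := direction_dotProduct_self r
    have hp_away := cap_neg_subset_awayCap (direction_dotProduct_self s) hv
      (direction_dotProduct_nonneg hsr) hp
    obtain ⟨w, hw, hrw, q, hq, hqx⟩ := ih hrL (boost_neg_mulVec_mem_cap hv hp_away)
    have hq_away := cap_subset_awayCap_neg hv hw hrw hq
    refine ⟨direction r, hv, direction_dotProduct_nonneg hsr, _, boost_mulVec_mem_cap hv hq_away,
      fun x => ?_⟩
    have hstep := margulisFunctional_add_le_margulisFunctional_affineBoost hv hp_away hq_away
      (margulisRep (FreeGroup.mk L) x)
    rw [margulisRep_mk_cons_apply, List.length_cons]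
    push_cast
    linarith [hqx x]

theorem length_toWord_le (γ : FreeGroup (Fin 2)) (x : Fin 3 → ℝ) :
    (γ.toWord.length : ℝ) ≤ 3000 * (‖x‖ + ‖margulisRep γ x‖) := by
  obtain ⟨s, hs⟩ := exists_isReduced_cons (FreeGroup.isReduced_toWord (x := γ))
  have hu := direction_dotProduct_self s
  have hp := vecCons_mem_cap (u := -direction s) (by simp [hu])
  obtain ⟨w, hw, hsw, q, hq, hqx⟩ := exists_mem_cap_le_margulisFunctional hs hp
  have hlower := hqx x
  rw [FreeGroup.mk_toWord] at hlower
  have hupper := le_of_abs_le (abs_margulisFunctional_le hw (cap_neg_subset_awayCap hu hw hsw hp) hq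
    (margulisRep γ x))
  linarith

theorem margulisRep_actsProperlyDiscontinuously :
    ActsProperlyDiscontinuously fun γ => margulisRep γ := by
  intro K hK
  obtain ⟨M, hM⟩ := hK.isBounded.exists_norm_le
  refine ((List.finite_length_le (Fin 2 × Bool) ⌊6000 * M⌋₊).preimage
    FreeGroup.toWord_injective.injOn).subset ?_
  rintro γ ⟨_, ⟨x, hx, rfl⟩, hy⟩
  refine Nat.le_floor ?_
  linarith [length_toWord_le γ x, hM x hx, hM _ hy]

end MargulisSpacetime

open MargulisSpacetime

/-- The columns of `F` form a Lorentzian frame, so the hypothesis on `F` says that the form `J` has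
a restriction of signature `(2, 1)`. -/
theorem proper_affine_action_free_group_SO_2n_2nsub1_general {ι : Type*} [Fintype ι]
    [DecidableEq ι] {J : Matrix ι ι ℝ} (hJ : J.IsSymm) {F : Matrix ι (Fin 3) ℝ}
    (hF : Fᵀ * J * F = minkowski) :
    ∃ ρ : FreeGroup (Fin 2) →* ((ι → ℝ) ≃ᵃ[ℝ] (ι → ℝ)), Function.Injective ρ ∧
      ActsProperlyDiscontinuously (fun γ => ρ γ) ∧ ∀ γ, ρ γ ∈ affineSpecialOrthogonal J := by
  have hdet : IsUnit minkowski.det := by simp [det_diagonal, Fin.prod_univ_three]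
  obtain ⟨Φ, π, hΦπ, hΦ⟩ := exists_equivariant_extension hJ hdet hF
  have hproper : ActsProperlyDiscontinuously fun γ => Φ.comp margulisRep γ :=
    margulisRep_actsProperlyDiscontinuously.of_semiconj π.continuous_of_finiteDimensional
      fun γ => hΦπ (margulisRep γ)
  exact ⟨Φ.comp margulisRep, hproper.injective, hproper,
    fun γ => hΦ _ (margulisRep_mem_affineSpecialOrthogonal γ)⟩

theorem exists_lorentzian_frame {n : ℕ} (hn : 1 ≤ n) :
    ∃ F : Matrix (Fin (4 * n - 1)) (Fin 3) ℝ,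
      Fᵀ * diagonal (fun i : Fin (4 * n - 1) => if (i : ℕ) < 2 * n then (1 : ℝ) else -1) * F =
        minkowski := by
  let e : Fin 3 → Fin (4 * n - 1) := ![⟨0, by omega⟩, ⟨1, by omega⟩, ⟨2 * n, by omega⟩]
  have he : Function.Injective e := by
    intro i j
    fin_cases i <;> fin_cases j <;> simp [e] <;> omega
  refine ⟨(1 : Matrix _ _ ℝ).submatrix id e, ?_⟩
  rw [transpose_submatrix_one_mul_diagonal_mul he]
  have hn_ne : n ≠ 0 := by omega
  have hn_lt : 1 < 2 * n := by omega
  congr 1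
  ext i
  fin_cases i <;> simp [e, hn_ne, hn_lt]

/-- **Proper affine actions with linear part in `SO(2n, 2n-1)`** (Margulis for `n = 1`;
Smilga, Danciger–Guéritaud–Kassel, Žager Korenjak in general): for every `n ≥ 1` there is an
injective homomorphism `ρ : F₂ → Aff(ℝ^{4n-1})` whose action on `ℝ^{4n-1}` is properly
discontinuous and such that the linear part `A` of each `ρ(γ)` satisfies `Aᵀ J A = J` and
`det A = 1`, where `J = diag(1,…,1,-1,…,-1)` with `2n` entries `1` and `2n-1` entries `-1`. -/
theorem proper_affine_action_free_group_SO_2n_2nsub1 (n : ℕ) (hn : 1 ≤ n) :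
    ∃ ρ : FreeGroup (Fin 2) →* ((Fin (4 * n - 1) → ℝ) ≃ᵃ[ℝ] (Fin (4 * n - 1) → ℝ)),
      Function.Injective ρ ∧
      (∀ K : Set (Fin (4 * n - 1) → ℝ), IsCompact K →
        {γ : FreeGroup (Fin 2) | ((ρ γ) '' K ∩ K).Nonempty}.Finite) ∧
      (∀ γ : FreeGroup (Fin 2),
        (LinearMap.toMatrix' ((ρ γ).linear.toLinearMap))ᵀ *
            Matrix.diagonal (fun i : Fin (4 * n - 1) =>
              if (i : ℕ) < 2 * n then (1 : ℝ) else -1) *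
            LinearMap.toMatrix' ((ρ γ).linear.toLinearMap) =
          Matrix.diagonal (fun i : Fin (4 * n - 1) =>
            if (i : ℕ) < 2 * n then (1 : ℝ) else -1) ∧
        (LinearMap.toMatrix' ((ρ γ).linear.toLinearMap)).det = 1) := by
  obtain ⟨F, hF⟩ := exists_lorentzian_frame hn
  exact proper_affine_action_free_group_SO_2n_2nsub1_general (isSymm_diagonal _) hF
end
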